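/- arXiv:2010.09652 — 2 statements merged into one kernel-verified Lean document; each statement's English description precedes it below -/
import Mathlib

section
/- If a nested path admits a sequence of nested interpolants, then the nested path has no run: there is no sequence of states s₀, …, s_{n+1} satisfying all the binary step relations at ordinary positions and all the ternary step relations (with the state at the matching call position as first argument) at return positions. -/
/-!
Along a run, every state `s i` lies in the interpolant `I i`: this holds at `0` since `I 0` is
everything, and the interpolant conditions propagate it along each step. At the last position it
contradicts `I (n + 1) = ∅`.
-/

/-- If a nested path (with matching function `ν`, binary step relations `R` at ordinary
positions, and ternary step relations `T` at return positions, whose first argument is the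
caller's state at the matching call position) admits a sequence of nested interpolants, then the
nested path has no run. -/
theorem nested_interpolants_no_run {σ : Type*} {n : ℕ}
    (ν : Fin (n + 1) → Option (Fin (n + 1)))
    (hν : ∀ i j : Fin (n + 1), ν i = some j → j < i)
    (R : Fin (n + 1) → σ → σ → Prop)
    (T : Fin (n + 1) → σ → σ → σ → Prop)
    (I : Fin (n + 2) → Set σ)
    (h0 : I 0 = Set.univ) (hlast : I (Fin.last (n + 1)) = ∅)
    (hstepR : ∀ i : Fin (n + 1), ν i = none →
      ∀ s t : σ, s ∈ I i.castSucc → R i s t → t ∈ I i.succ)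
    (hstepT : ∀ i j : Fin (n + 1), ν i = some j →
      ∀ c s t : σ, c ∈ I j.castSucc → s ∈ I i.castSucc → T i c s t → t ∈ I i.succ) :
    ¬ ∃ s : Fin (n + 2) → σ,
        (∀ i : Fin (n + 1), ν i = none → R i (s i.castSucc) (s i.succ)) ∧
        (∀ i j : Fin (n + 1), ν i = some j →
          T i (s j.castSucc) (s i.castSucc) (s i.succ)) := by
  rintro ⟨s, hR, hT⟩
  -- Strong induction: a return position also needs membership at its matching call, which `hν`
  -- places earlier.
  have mem : ∀ (k : ℕ) (i : Fin (n + 2)), (i : ℕ) = k → s i ∈ I i := by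
    intro k
    induction k using Nat.strong_induction_on with
    | _ k ih =>
      intro i hi
      induction i using Fin.cases with
      | zero => rw [h0]; exact Set.mem_univ _
      | succ i =>
        rw [Fin.val_succ] at hi
        have hcur : s i.castSucc ∈ I i.castSucc :=
          ih i (by omega) _ (Fin.val_castSucc i)
        cases hi' : ν i with
        | none => exact hstepR i hi' _ _ hcur (hR i hi')
        | some j =>
          have hlt : (j : ℕ) < i := hν i j hi'
          exact hstepT i j hi' _ _ _ (ih j (by omega) _ (Fin.val_castSucc j)) hcur (hT i j hi')
  have hmem := mem _ (Fin.last (n + 1)) rfl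
  rw [hlast] at hmem
  exact hmem
end

section
/- Let I be a sequence of interpolants for a path of relations R (so I 0 = univ, I (n+1) = ∅, and each R i maps I i into I (i+1)). Then for every sign assignment b : Fin (n+2) → Bool there is some position i ≤ n at which the refined edge is infeasible: there are no states s ∈ J i and t ∈ J (i+1) with R i s t. Hence the spurious counterexample path is excluded from the refined abstraction for every choice of cube signs. -/
/-- The refined node set at position `k` for interpolant family `I` and sign assignment `b`:
`I k` itself when `b k = true`, and its set complement when `b k = false`. -/
def refinedNode {σ : Type*} {n : ℕ} (I : Fin (n + 2) → Set σ) (b : Fin (n + 2) → Bool)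
    (k : Fin (n + 2)) : Set σ :=
  if b k then I k else (I k)ᶜ

/-- If `I` is a sequence of interpolants for a path of relations `R` (so `I 0 = univ`,
`I (n+1) = ∅`, and each `R i` maps `I i` into `I (i+1)`), then for every sign assignment
`b : Fin (n+2) → Bool` there is a position `i ≤ n` at which the refined edge is infeasible:
no states `s ∈ J i` and `t ∈ J (i+1)` satisfy `R i s t`. Hence the spurious counterexample
path is excluded from the refined abstraction for every choice of cube signs. -/
theorem refinement_excludes_counterexample {σ : Type*} {n : ℕ}
    (R : Fin (n + 1) → σ → σ → Prop) (I : Fin (n + 2) → Set σ)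
    (h0 : I 0 = Set.univ) (hlast : I (Fin.last (n + 1)) = ∅)
    (hstep : ∀ i : Fin (n + 1), ∀ s t : σ, s ∈ I i.castSucc → R i s t → t ∈ I i.succ)
    (b : Fin (n + 2) → Bool) :
    ∃ i : Fin (n + 1),
      ¬ ∃ s t : σ, s ∈ refinedNode I b i.castSucc ∧ t ∈ refinedNode I b i.succ ∧ R i s t := by
  -- If every edge were feasible, every sign would be forced to be `true`: at `0` because
  -- `univᶜ` has no state, and onwards because steps preserve the interpolants. The last
  -- refined node would then be `∅`, so the last edge could not be feasible after all.
  by_contra! h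
  have hb : ∀ k, b k = true := by
    intro k
    induction k using Fin.induction with
    | zero =>
      obtain ⟨s, t, hs, -, -⟩ := h 0
      by_contra hk
      simp [refinedNode, hk, h0] at hs
    | succ i ih =>
      obtain ⟨s, t, hs, ht, hR⟩ := h i
      by_contra hk
      simp only [refinedNode, ih, hk, if_true] at hs ht
      exact ht (hstep i s t hs hR)
  obtain ⟨s, t, -, ht, -⟩ := h (Fin.last n)
  simp [refinedNode, hb, hlast] at ht
end
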